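/- Explicit projection onto the feasible set Ω. For any D ∈ ℝ^{M×M}, let {(λ_m, v_m)}_{m=1}^M be the eigenvalues and an orthonormal eigenbasis of the symmetric matrix (I_M − P_U)((D + Dᵀ)/2)(I_M − P_U). Then the matrix A° = P_U + Σ_{m=1}^M clamp_{1−ε}(λ_m) v_m v_mᵀ belongs to Ω and is the unique minimizer of the Frobenius norm ‖A − D‖_F over all A ∈ Ω; equivalently, the Frobenius-norm projection of D onto Ω is obtained by first projecting D onto Ω₁ = {A : AU = U, A = Aᵀ} and then projecting the result onto Ω₂ = {A : ‖A − P_U‖ ≤ 1 − ε}. -/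

import Mathlib

/-!
Write `P = U Uᵀ`, `Q = 1 - P`, `S = Q ((D + Dᵀ)/2) Q = ∑ lam m • v m (v m)ᵀ`, `r = 1 - ε`, `c m` for the
clamped eigenvalues and `C = ∑ c m • v m (v m)ᵀ`, so that the candidate is `P + C`.

*Feasibility.* Since `S U = 0`, every eigenvector with `lam m ≠ 0` is orthogonal to the columns of
`U`, while `lam m = 0` forces `c m = 0`; hence `C U = 0`. As `C` is orthogonally similar to
`diagonal c`, its spectral norm is at most `r`.

*Optimality.* The feasible set is convex, so it suffices to prove the variational inequality
`⟨A - (P + C), (P + C) - D⟩ ≥ 0` for feasible `A`. The matrix `E = A - P - C` is symmetric and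
kills `U`, so `E = Q E Q` and the left-hand side equals
`⟨E, C - S⟩ = ∑ (c m - lam m) (b m - c m)` with `b m = (v m)ᵀ (A - P) (v m) ∈ [-r, r]`.
Each summand is nonnegative because `c m` is the projection of `lam m` onto `[-r, r]`. Expanding
the square then gives `‖A - D‖² ≥ ‖P + C - D‖² + ‖A - P - C‖²`, which yields minimality and
uniqueness.
-/

open Matrix

/-- The spectral (operator `ℓ²`-) norm of a real square matrix. -/
noncomputable def specNormR {M : ℕ} (X : Matrix (Fin M) (Fin M) ℝ) : ℝ :=
  ‖Matrix.toEuclideanCLM (𝕜 := ℝ) X‖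

/-- The Frobenius norm `‖X‖_F = √Tr(XᵀX)` of a real square matrix. -/
noncomputable def frobNorm {M : ℕ} (X : Matrix (Fin M) (Fin M) ℝ) : ℝ :=
  Real.sqrt ((Xᵀ * X).trace)

/-- `clamp_r(λ) = min (max λ (-r)) r`. -/
def clamp (r lam : ℝ) : ℝ := min (max lam (-r)) r

/-- The spectral norm bounds the quadratic form on unit vectors. -/
lemma abs_quadForm_le_specNormR {M : ℕ} (B : Matrix (Fin M) (Fin M) ℝ) (x : Fin M → ℝ)
    (hx : x ⬝ᵥ x = 1) : |x ⬝ᵥ B *ᵥ x| ≤ specNormR B := by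
  set y : EuclideanSpace ℝ (Fin M) := WithLp.toLp 2 x with hy
  have hn : ‖y‖ = 1 := by
    have h : ‖y‖ ^ 2 = 1 := by
      rw [← real_inner_self_eq_norm_sq, EuclideanSpace.inner_eq_star_dotProduct]
      simpa [hy] using hx
    nlinarith [norm_nonneg y]
  have h1 : x ⬝ᵥ B *ᵥ x = inner ℝ y (Matrix.toEuclideanCLM (𝕜 := ℝ) B y) := by
    rw [EuclideanSpace.inner_eq_star_dotProduct]
    simp [hy, dotProduct_comm]
  rw [h1]
  calc _ ≤ ‖y‖ * ‖Matrix.toEuclideanCLM (𝕜 := ℝ) B y‖ := abs_real_inner_le_norm _ _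
    _ ≤ ‖y‖ * (‖Matrix.toEuclideanCLM (𝕜 := ℝ) B‖ * ‖y‖) := by
        gcongr
        exact ContinuousLinearMap.le_opNorm _ _
    _ = specNormR B := by simp [hn, specNormR]

lemma spectralSum_eq {M : ℕ} (c : Fin M → ℝ) (v : Fin M → Fin M → ℝ) :
    ∑ m, c m • vecMulVec (v m) (v m) = (of v)ᵀ * diagonal c * of v := by
  ext i j
  rw [Matrix.mul_apply]
  simp only [Matrix.sum_apply, Matrix.smul_apply, vecMulVec_apply,
    mul_diagonal, transpose_apply, of_apply, smul_eq_mul]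
  exact Finset.sum_congr rfl fun m _ => by ring

open scoped Matrix.Norms.L2Operator in
lemma specNormR_spectralSum_le {M : ℕ} (c : Fin M → ℝ) (v : Fin M → Fin M → ℝ)
    (hortho : ∀ a b : Fin M, v a ⬝ᵥ v b = if a = b then (1 : ℝ) else 0)
    (r : ℝ) (hr : 0 ≤ r) (hc : ∀ m, |c m| ≤ r) :
    specNormR (∑ m, c m • vecMulVec (v m) (v m)) ≤ r := by
  have hV : of v * (of v)ᵀ = 1 := by
    ext a b
    rw [Matrix.one_apply, ← hortho a b]
    rfl
  have hN : ‖(of v)ᵀ‖ * ‖of v‖ ≤ 1 := by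
    have h1 : ‖(of v)ᵀ‖ = ‖of v‖ := by
      rw [← conjTranspose_eq_transpose_of_trivial, l2_opNorm_conjTranspose]
    have h2 : ‖of v‖ * ‖of v‖ = ‖(1 : Matrix (Fin M) (Fin M) ℝ)‖ := by
      rw [← l2_opNorm_conjTranspose_mul_self, conjTranspose_eq_transpose_of_trivial,
        mul_eq_one_comm.mp hV]
    rw [h1, h2, ← diagonal_one, l2_opNorm_diagonal]
    exact (pi_norm_le_iff_of_nonneg zero_le_one).2 fun _ => by simp
  have hd : ‖diagonal c‖ ≤ r := by
    rw [l2_opNorm_diagonal]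
    exact (pi_norm_le_iff_of_nonneg hr).2 hc
  rw [spectralSum_eq]
  change ‖(of v)ᵀ * diagonal c * of v‖ ≤ r
  calc _ ≤ ‖(of v)ᵀ‖ * ‖diagonal c‖ * ‖of v‖ :=
        (norm_mul_le _ _).trans (by gcongr; exact norm_mul_le _ _)
    _ = (‖(of v)ᵀ‖ * ‖of v‖) * ‖diagonal c‖ := by ring
    _ ≤ 1 * r := by gcongr
    _ = r := one_mul r

lemma spectralSum_mulVec {M : ℕ} (c : Fin M → ℝ) (v : Fin M → Fin M → ℝ)
    (hortho : ∀ a b : Fin M, v a ⬝ᵥ v b = if a = b then (1 : ℝ) else 0) (m : Fin M) :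
    (∑ k, c k • vecMulVec (v k) (v k)) *ᵥ v m = c m • v m := by
  simp [Matrix.sum_mulVec, Matrix.smul_mulVec, vecMulVec_mulVec, hortho]

lemma trace_mul_spectralSum {M : ℕ} (E : Matrix (Fin M) (Fin M) ℝ)
    (c : Fin M → ℝ) (v : Fin M → Fin M → ℝ) :
    (E * ∑ k, c k • vecMulVec (v k) (v k)).trace = ∑ k, c k * (v k ⬝ᵥ E *ᵥ v k) := by
  simp [Finset.mul_sum, Matrix.trace_sum, mul_vecMulVec, trace_vecMulVec, dotProduct_comm]

lemma abs_clamp_le {r : ℝ} (hr : 0 ≤ r) (x : ℝ) : |clamp r x| ≤ r := by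
  unfold clamp
  exact abs_le.2 ⟨le_min (le_max_right _ _) (by linarith), min_le_right _ _⟩

lemma clamp_zero {r : ℝ} (hr : 0 ≤ r) : clamp r 0 = 0 := by
  unfold clamp
  rw [max_eq_left (by linarith), min_eq_left hr]

/-- The variational inequality characterizing `clamp r x` as the projection of `x` onto
`[-r, r]`. -/
lemma clamp_variational {r : ℝ} (hr : 0 ≤ r) (x b : ℝ) (hb : |b| ≤ r) :
    0 ≤ (clamp r x - x) * (b - clamp r x) := by
  obtain ⟨h1, h2⟩ := abs_le.1 hb
  unfold clamp
  rcases le_total x (-r) with h | h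
  · rw [max_eq_right h, min_eq_left (by linarith)]
    exact mul_nonneg (by linarith) (by linarith)
  · rw [max_eq_left h]
    rcases le_total x r with h' | h'
    · simp [min_eq_left h']
    · rw [min_eq_right h']
      exact mul_nonneg_of_nonpos_of_nonpos (by linarith) (by linarith)

lemma trace_transpose_mul_self_nonneg {M : ℕ} (X : Matrix (Fin M) (Fin M) ℝ) :
    0 ≤ (Xᵀ * X).trace := by
  simpa using (posSemidef_conjTranspose_mul_self X).trace_nonneg

/-- Expansion of `‖E + F‖_F²` for symmetric `E`. -/
lemma trace_sq_add {M : ℕ} (E F : Matrix (Fin M) (Fin M) ℝ) (hE : Eᵀ = E) :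
    ((E + F)ᵀ * (E + F)).trace
      = (Eᵀ * E).trace + (Fᵀ * F).trace + 2 * (E * F).trace := by
  have h : (Fᵀ * E).trace = (E * F).trace := by
    rw [← trace_transpose, transpose_mul, transpose_transpose, hE]
  rw [transpose_add, add_mul, mul_add, mul_add, trace_add, trace_add, trace_add, h, hE]
  ring

/-- A symmetric matrix killing the range of `U` only sees the compressed symmetric part of `D`. -/
lemma trace_mul_eq_compressed {M P : ℕ} (U : Matrix (Fin M) (Fin P) ℝ)
    (E D : Matrix (Fin M) (Fin M) ℝ) (hE : Eᵀ = E) (hEU : E * U = 0) :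
    (E * D).trace
      = (E * ((1 - U * Uᵀ) * ((2 : ℝ)⁻¹ • (D + Dᵀ)) * (1 - U * Uᵀ))).trace := by
  have hQ : E * (1 - U * Uᵀ) = E := by
    rw [Matrix.mul_sub, Matrix.mul_one, ← Matrix.mul_assoc, hEU, Matrix.zero_mul, sub_zero]
  have hUE : Uᵀ * E = 0 := by
    rw [← hE, ← transpose_mul, hEU, transpose_zero]
  have hQ' : (1 - U * Uᵀ) * E = E := by
    rw [Matrix.sub_mul, Matrix.one_mul, Matrix.mul_assoc, hUE, Matrix.mul_zero, sub_zero]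
  have hD : (E * Dᵀ).trace = (E * D).trace := by
    rw [← trace_transpose, transpose_mul, transpose_transpose, hE, trace_mul_comm]
  rw [← Matrix.mul_assoc, ← Matrix.mul_assoc, hQ, trace_mul_comm _ (1 - U * Uᵀ),
    ← Matrix.mul_assoc, hQ', Matrix.mul_smul, Matrix.mul_add,
    trace_smul, trace_add, hD, smul_eq_mul]
  ring

/-- **Explicit projection onto the feasible set
`Ω = {A : AU = U, A = Aᵀ, ‖A - P_U‖ ≤ 1 - ε}`.**
`U ∈ ℝ^{M×P}` has orthonormal columns, `P_U = UUᵀ`, `ε ∈ (0,1]`.  For any `D ∈ ℝ^{M×M}`,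
let `{(λₘ, vₘ)}` be an orthonormal eigendecomposition of the symmetric matrix
`(I - P_U)((D + Dᵀ)/2)(I - P_U)`.  Then `A° = P_U + Σₘ clamp_{1-ε}(λₘ) vₘ vₘᵀ` belongs to
`Ω` and is the unique minimizer of the Frobenius norm `‖A - D‖_F` over all `A ∈ Ω`. -/
theorem projection_onto_feasible_set_Omega
    {M P : ℕ} (U : Matrix (Fin M) (Fin P) ℝ) (hU : Uᵀ * U = 1)
    (ε : ℝ) (hε0 : 0 < ε) (hε1 : ε ≤ 1)
    (D : Matrix (Fin M) (Fin M) ℝ)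
    (lam : Fin M → ℝ) (v : Fin M → Fin M → ℝ)
    (hortho : ∀ a b : Fin M, v a ⬝ᵥ v b = if a = b then (1 : ℝ) else 0)
    (hdecomp : (1 - U * Uᵀ) * ((2 : ℝ)⁻¹ • (D + Dᵀ)) * (1 - U * Uᵀ) =
      ∑ m : Fin M, lam m • vecMulVec (v m) (v m)) :
    ((U * Uᵀ + ∑ m : Fin M, clamp (1 - ε) (lam m) • vecMulVec (v m) (v m)) * U = U ∧
     U * Uᵀ + ∑ m : Fin M, clamp (1 - ε) (lam m) • vecMulVec (v m) (v m) =
       (U * Uᵀ + ∑ m : Fin M, clamp (1 - ε) (lam m) • vecMulVec (v m) (v m))ᵀ ∧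
     specNormR ((U * Uᵀ + ∑ m : Fin M, clamp (1 - ε) (lam m) • vecMulVec (v m) (v m))
        - U * Uᵀ) ≤ 1 - ε) ∧
    ∀ A : Matrix (Fin M) (Fin M) ℝ,
      A * U = U → A = Aᵀ → specNormR (A - U * Uᵀ) ≤ 1 - ε →
      frobNorm ((U * Uᵀ + ∑ m : Fin M, clamp (1 - ε) (lam m) • vecMulVec (v m) (v m)) - D)
          ≤ frobNorm (A - D) ∧
      (frobNorm (A - D) =
          frobNorm ((U * Uᵀ + ∑ m : Fin M, clamp (1 - ε) (lam m) • vecMulVec (v m) (v m))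
            - D) →
        A = U * Uᵀ + ∑ m : Fin M, clamp (1 - ε) (lam m) • vecMulVec (v m) (v m)) := by
  have hr : 0 ≤ 1 - ε := by linarith
  set r := 1 - ε with hrdef
  set c : Fin M → ℝ := fun m => clamp r (lam m) with hc
  set C := ∑ m : Fin M, clamp r (lam m) • vecMulVec (v m) (v m) with hC
  have hC' : C = ∑ m, c m • vecMulVec (v m) (v m) := rfl
  have hPU : U * Uᵀ * U = U := by rw [Matrix.mul_assoc, hU, Matrix.mul_one]
  -- `Uᵀ S = 0`, so `lam m • Uᵀ v m = 0`.
  have hlam : ∀ m, lam m • (Uᵀ *ᵥ v m) = 0 := by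
    intro m
    rw [← mulVec_smul, ← spectralSum_mulVec lam v hortho m, ← hdecomp, mulVec_mulVec,
      ← Matrix.mul_assoc, ← Matrix.mul_assoc]
    have : Uᵀ * (1 - U * Uᵀ) = 0 := by
      rw [Matrix.mul_sub, Matrix.mul_one, ← Matrix.mul_assoc, hU, Matrix.one_mul, sub_self]
    rw [this, Matrix.zero_mul, Matrix.zero_mul, zero_mulVec]
  have hcU : ∀ m, c m • (Uᵀ *ᵥ v m) = 0 := by
    intro m
    rcases smul_eq_zero.1 (hlam m) with h | h
    · simp [hc, h, clamp_zero hr]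
    · simp [h]
  have hCU : C * U = 0 := by
    rw [hC', Matrix.sum_mul]
    refine Finset.sum_eq_zero fun m _ => ?_
    rw [Matrix.smul_mul, vecMulVec_mul, ← mulVec_transpose, ← vecMulVec_smul, hcU m]
    ext i j
    simp [vecMulVec_apply]
  have hCT : Cᵀ = C := by
    rw [hC', transpose_sum]
    exact Finset.sum_congr rfl fun m _ => by rw [transpose_smul, transpose_vecMulVec]
  have hPT : (U * Uᵀ)ᵀ = U * Uᵀ := by rw [transpose_mul, transpose_transpose]
  refine ⟨⟨?_, ?_, ?_⟩, ?_⟩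
  · rw [Matrix.add_mul, hPU, hCU, add_zero]
  · rw [transpose_add, hPT, hCT]
  · rw [add_sub_cancel_left]
    exact specNormR_spectralSum_le c v hortho r hr fun m => abs_clamp_le hr _
  intro A hAU hAT hA
  set E := A - U * Uᵀ - C with hEdef
  have hET : Eᵀ = E := by
    rw [hEdef, transpose_sub, transpose_sub, hPT, hCT, ← hAT]
  have hEU : E * U = 0 := by
    rw [hEdef, Matrix.sub_mul, Matrix.sub_mul, hAU, hPU, hCU, sub_self, sub_zero]
  have hquad : ∀ m, v m ⬝ᵥ E *ᵥ v m = v m ⬝ᵥ (A - U * Uᵀ) *ᵥ v m - c m := by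
    intro m
    rw [hEdef, sub_mulVec, dotProduct_sub, hC', spectralSum_mulVec c v hortho, dotProduct_smul,
      hortho]
    simp
  have hvar : 0 ≤ (E * (U * Uᵀ + C - D)).trace := by
    have hEP : E * (U * Uᵀ) = 0 := by rw [← Matrix.mul_assoc, hEU, Matrix.zero_mul]
    rw [Matrix.mul_sub, Matrix.mul_add, hEP, zero_add, trace_sub, trace_mul_eq_compressed U E D hET hEU,
      hdecomp, hC', trace_mul_spectralSum, trace_mul_spectralSum, ← Finset.sum_sub_distrib]
    refine Finset.sum_nonneg fun m _ => ?_
    rw [← sub_mul, hquad]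
    exact clamp_variational hr _ _
      ((abs_quadForm_le_specNormR _ _ (by simp [hortho])).trans hA)
  have hexp := trace_sq_add E (U * Uᵀ + C - D) hET
  have hsum : E + (U * Uᵀ + C - D) = A - D := by rw [hEdef]; abel
  rw [hsum] at hexp
  have hE0 := trace_transpose_mul_self_nonneg E
  refine ⟨Real.sqrt_le_sqrt (by linarith), fun heq => ?_⟩
  have heq' := (Real.sqrt_inj (trace_transpose_mul_self_nonneg _)
    (trace_transpose_mul_self_nonneg _)).1 heq
  have hEz : (Eᴴ * E).trace = 0 := by
    rw [conjTranspose_eq_transpose_of_trivial]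
    linarith
  have hE : E = 0 := trace_conjTranspose_mul_self_eq_zero_iff.1 hEz
  rw [hEdef, sub_sub, sub_eq_zero] at hE
  exact hE
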